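/- Let Λ_A and Λ_B be linear maps on d_A×d_A and d_B×d_B complex matrices, respectively, such that (Λ_A⊗id)(P₊^{(d_A)}) = ∑_i p_i^A |e_i⟩⟨e_i| ⊗ σ_i^B is a CQ state and (id⊗Λ_B)(P₊^{(d_B)}) = ∑_j p_j^B σ_j^A ⊗ |f_j⟩⟨f_j| is a QC state (with {e_i}, {f_j} orthonormal bases and σ_i^B, σ_j^A states). Set E_i^A := d_A p_i^A (σ_i^B)ᵀ and E_j^B := d_B p_j^B (σ_j^A)ᵀ. Then for every bipartite state ρ_AB on ℂ^{d_A} ⊗ ℂ^{d_B}, (Λ_A⊗Λ_B)(ρ_AB) = ∑_{i,j} Tr( ρ_AB · (E_i^A ⊗ E_j^B) ) |e_i⟩⟨e_i| ⊗ |f_j⟩⟨f_j|, which is a CC state. -/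

import Mathlib

open Matrix Kronecker BigOperators
open scoped ComplexOrder

noncomputable section

/-- Rank-one projector `|v⟩⟨v|`. -/
def proj {n : Type*} (v : n → ℂ) : Matrix n n ℂ :=
  Matrix.of fun a b => v a * star (v b)

/-- `e` is an orthonormal basis (an orthonormal family of `d` vectors) of `ℂ^d`. -/
def ONB (d : ℕ) (e : Fin d → Fin d → ℂ) : Prop :=
  ∀ i j, star (e i) ⬝ᵥ e j = if i = j then 1 else 0

/-- A quantum state: positive semidefinite with unit trace. -/
def IsState {n : Type*} [Fintype n] [DecidableEq n] (ρ : Matrix n n ℂ) : Prop :=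
  ρ.PosSemidef ∧ ρ.trace = 1

/-- The maximally entangled projector `P₊ = (1/d) ∑_{i,j} |ii⟩⟨jj|`. -/
def Pplus (d : ℕ) : Matrix (Fin d × Fin d) (Fin d × Fin d) ℂ :=
  Matrix.of fun p q => if p.1 = p.2 ∧ q.1 = q.2 then (d : ℂ)⁻¹ else 0

/-- `id ⊗ Λ`: the extension of `Λ` acting on the second tensor factor. -/
def idTensor {dA dB : ℕ}
    (Λ : Matrix (Fin dB) (Fin dB) ℂ → Matrix (Fin dB) (Fin dB) ℂ)
    (M : Matrix (Fin dA × Fin dB) (Fin dA × Fin dB) ℂ) :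
    Matrix (Fin dA × Fin dB) (Fin dA × Fin dB) ℂ :=
  Matrix.of fun p q => Λ (Matrix.of fun b b' => M (p.1, b) (q.1, b')) p.2 q.2

/-- `Λ ⊗ id`: the extension of `Λ` acting on the first tensor factor. -/
def tensorId {dA dB : ℕ}
    (Λ : Matrix (Fin dA) (Fin dA) ℂ → Matrix (Fin dA) (Fin dA) ℂ)
    (M : Matrix (Fin dA × Fin dB) (Fin dA × Fin dB) ℂ) :
    Matrix (Fin dA × Fin dB) (Fin dA × Fin dB) ℂ :=
  Matrix.of fun p q => Λ (Matrix.of fun a a' => M (a, p.2) (a', q.2)) p.1 q.1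

/-- Partial trace over the first factor. -/
def ptraceA {dA dB : ℕ} (M : Matrix (Fin dA × Fin dB) (Fin dA × Fin dB) ℂ) :
    Matrix (Fin dB) (Fin dB) ℂ :=
  Matrix.of fun b b' => ∑ a, M (a, b) (a, b')

/-- Partial trace over the second factor. -/
def ptraceB {dA dB : ℕ} (M : Matrix (Fin dA × Fin dB) (Fin dA × Fin dB) ℂ) :
    Matrix (Fin dA) (Fin dA) ℂ :=
  Matrix.of fun a a' => ∑ b, M (a, b) (a', b)

/-- Trace preserving map. -/
def TracePreserving {d : ℕ}
    (Λ : Matrix (Fin d) (Fin d) ℂ → Matrix (Fin d) (Fin d) ℂ) : Prop :=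
  ∀ X, (Λ X).trace = X.trace

/-- QC (quantum–classical) bipartite state. -/
def IsQC {dA dB : ℕ} (σ : Matrix (Fin dA × Fin dB) (Fin dA × Fin dB) ℂ) : Prop :=
  ∃ (e : Fin dB → Fin dB → ℂ) (p : Fin dB → ℝ)
    (ρ : Fin dB → Matrix (Fin dA) (Fin dA) ℂ),
    ONB dB e ∧ (∀ i, 0 ≤ p i) ∧ (∑ i, p i) = 1 ∧ (∀ i, IsState (ρ i)) ∧
      σ = ∑ i, (p i : ℂ) • (ρ i ⊗ₖ proj (e i))

/-- CQ (classical–quantum) bipartite state. -/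
def IsCQ {dA dB : ℕ} (σ : Matrix (Fin dA × Fin dB) (Fin dA × Fin dB) ℂ) : Prop :=
  ∃ (e : Fin dA → Fin dA → ℂ) (p : Fin dA → ℝ)
    (ρ : Fin dA → Matrix (Fin dB) (Fin dB) ℂ),
    ONB dA e ∧ (∀ i, 0 ≤ p i) ∧ (∑ i, p i) = 1 ∧ (∀ i, IsState (ρ i)) ∧
      σ = ∑ i, (p i : ℂ) • (proj (e i) ⊗ₖ ρ i)

/-- CC (classical–classical) bipartite state. -/
def IsCC {dA dB : ℕ} (σ : Matrix (Fin dA × Fin dB) (Fin dA × Fin dB) ℂ) : Prop :=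
  ∃ (e : Fin dA → Fin dA → ℂ) (f : Fin dB → Fin dB → ℂ) (p : Fin dA → Fin dB → ℝ),
    ONB dA e ∧ ONB dB f ∧ (∀ i j, 0 ≤ p i j) ∧ (∑ i, ∑ j, p i j) = 1 ∧
      σ = ∑ i, ∑ j, (p i j : ℂ) • (proj (e i) ⊗ₖ proj (f j))

/-- `Λ_A ⊗ Λ_B`, realized as `(Λ_A ⊗ id) ∘ (id ⊗ Λ_B)`; for linear maps this is the
unique linear map with `(Λ_A ⊗ Λ_B)(A ⊗ B) = Λ_A(A) ⊗ Λ_B(B)`. -/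
def tensorMap {dA dB : ℕ}
    (ΛA : Matrix (Fin dA) (Fin dA) ℂ → Matrix (Fin dA) (Fin dA) ℂ)
    (ΛB : Matrix (Fin dB) (Fin dB) ℂ → Matrix (Fin dB) (Fin dB) ℂ)
    (M : Matrix (Fin dA × Fin dB) (Fin dA × Fin dB) ℂ) :
    Matrix (Fin dA × Fin dB) (Fin dA × Fin dB) ℂ :=
  tensorId ΛA (idTensor ΛB M)

/-!
The Choi matrix `J` of `Λ` determines it through `Λ X = d • Tr₂ (J (1 ⊗ Xᵀ))`. Hence a CQ Choi
matrix `∑ i, |e_i⟩⟨e_i| ⊗ S_i` forces the measure-and-prepare form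
`Λ X = ∑ i, Tr (X (d S_iᵀ)) |e_i⟩⟨e_i|`, and a QC Choi matrix reduces to this case by swapping the
tensor factors. The tensor product of two measure-and-prepare maps measures and prepares with the
Kronecker products. Its weights on a state are nonnegative, as traces of products of positive
semidefinite matrices, and they sum to one by trace preservation.
-/

lemma sum_kronecker {ι l m n o R : Type*} [NonUnitalNonAssocSemiring R] (s : Finset ι)
    (A : ι → Matrix l m R) (B : Matrix n o R) : (∑ i ∈ s, A i) ⊗ₖ B = ∑ i ∈ s, A i ⊗ₖ B := by
  ext p q
  simp [Matrix.sum_apply, Finset.sum_mul]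

lemma trace_proj {n : Type*} [Fintype n] (v : n → ℂ) : (proj v).trace = star v ⬝ᵥ v := by
  rw [dotProduct_comm]
  exact trace_vecMulVec v (star v)

lemma ONB.trace_proj_eq_one {d : ℕ} {e : Fin d → Fin d → ℂ} (he : ONB d e) (i : Fin d) :
    (proj (e i)).trace = 1 := by
  rw [trace_proj, he i i, if_pos rfl]

lemma trace_mul_nonneg_of_posSemidef {n 𝕜 : Type*} [Fintype n] [RCLike 𝕜] {A B : Matrix n n 𝕜}
    (hA : A.PosSemidef) (hB : B.PosSemidef) : 0 ≤ (A * B).trace := by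
  obtain ⟨m, v, rfl⟩ := posSemidef_iff_eq_sum_vecMulVec.mp hB
  rw [Matrix.mul_sum, trace_sum]
  refine Finset.sum_nonneg fun i _ => ?_
  rw [mul_vecMulVec, trace_vecMulVec, dotProduct_comm]
  exact hA.dotProduct_mulVec_nonneg (v i)

section PartialTrace

variable {dA dB : ℕ}

lemma ptraceB_sum {ι : Type*} (s : Finset ι)
    (M : ι → Matrix (Fin dA × Fin dB) (Fin dA × Fin dB) ℂ) :
    ptraceB (∑ i ∈ s, M i) = ∑ i ∈ s, ptraceB (M i) := by
  ext a a'
  simp only [ptraceB, of_apply, Matrix.sum_apply]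
  exact Finset.sum_comm

lemma ptraceB_kronecker (A : Matrix (Fin dA) (Fin dA) ℂ) (B : Matrix (Fin dB) (Fin dB) ℂ) :
    ptraceB (A ⊗ₖ B) = B.trace • A := by
  ext a a'
  simp [ptraceB, trace, ← Finset.mul_sum, mul_comm]

lemma ptraceB_mul_one_kronecker_apply (M : Matrix (Fin dA × Fin dB) (Fin dA × Fin dB) ℂ)
    (B : Matrix (Fin dB) (Fin dB) ℂ) (a a' : Fin dA) :
    ptraceB (M * (1 ⊗ₖ B)) a a' = ((of fun b b' => M (a, b) (a', b')) * B).trace := by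
  simp [ptraceB, trace, Matrix.mul_apply, Fintype.sum_prod_type_right, one_apply]

lemma trace_ptraceB_mul (M : Matrix (Fin dA × Fin dB) (Fin dA × Fin dB) ℂ)
    (A : Matrix (Fin dA) (Fin dA) ℂ) :
    (ptraceB M * A).trace = (M * (A ⊗ₖ 1)).trace := by
  simp only [ptraceB, trace, diag_apply, Matrix.mul_apply, of_apply, kroneckerMap_apply, one_apply,
    Fintype.sum_prod_type, mul_ite, mul_one, mul_zero, Finset.sum_ite_eq', Finset.mem_univ, if_true,
    Finset.sum_mul]
  exact Finset.sum_congr rfl fun a _ => Finset.sum_comm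

lemma trace_ptraceB_mul_one_kronecker_mul (M : Matrix (Fin dA × Fin dB) (Fin dA × Fin dB) ℂ)
    (A : Matrix (Fin dA) (Fin dA) ℂ) (B : Matrix (Fin dB) (Fin dB) ℂ) :
    (ptraceB (M * (1 ⊗ₖ B)) * A).trace = (M * (A ⊗ₖ B)).trace := by
  rw [trace_ptraceB_mul, Matrix.mul_assoc, ← mul_kronecker_mul, Matrix.one_mul, Matrix.mul_one]

end PartialTrace

section TensorExtension

variable {dA dB : ℕ}

lemma tensorId_sum {ι : Type*} (Λ : Matrix (Fin dA) (Fin dA) ℂ →ₗ[ℂ] Matrix (Fin dA) (Fin dA) ℂ)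
    (s : Finset ι) (M : ι → Matrix (Fin dA × Fin dB) (Fin dA × Fin dB) ℂ) :
    tensorId Λ (∑ i ∈ s, M i) = ∑ i ∈ s, tensorId Λ (M i) := by
  ext p q
  have block_sum : (of fun a a' => (∑ i ∈ s, M i) (a, p.2) (a', q.2))
      = ∑ i ∈ s, of fun a a' => M i (a, p.2) (a', q.2) := by
    ext a a'
    simp [Matrix.sum_apply]
  rw [tensorId, of_apply, block_sum, map_sum, Matrix.sum_apply, Matrix.sum_apply]
  rfl

lemma tensorId_kronecker (Λ : Matrix (Fin dA) (Fin dA) ℂ →ₗ[ℂ] Matrix (Fin dA) (Fin dA) ℂ)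
    (A : Matrix (Fin dA) (Fin dA) ℂ) (B : Matrix (Fin dB) (Fin dB) ℂ) :
    tensorId Λ (A ⊗ₖ B) = Λ A ⊗ₖ B := by
  ext p q
  have block_eq : (of fun a a' => (A ⊗ₖ B) (a, p.2) (a', q.2)) = B p.2 q.2 • A := by
    ext a a'
    simp [mul_comm]
  rw [tensorId, of_apply, block_eq, map_smul, Matrix.smul_apply, smul_eq_mul, mul_comm,
    kroneckerMap_apply]

lemma TracePreserving.trace_tensorId {Λ : Matrix (Fin dA) (Fin dA) ℂ → Matrix (Fin dA) (Fin dA) ℂ}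
    (hΛ : TracePreserving Λ) (M : Matrix (Fin dA × Fin dB) (Fin dA × Fin dB) ℂ) :
    (tensorId Λ M).trace = M.trace := by
  simp only [trace, diag_apply, Fintype.sum_prod_type_right]
  exact Finset.sum_congr rfl fun b _ => hΛ (of fun a a' => M (a, b) (a', b))

lemma TracePreserving.trace_idTensor {Λ : Matrix (Fin dB) (Fin dB) ℂ → Matrix (Fin dB) (Fin dB) ℂ}
    (hΛ : TracePreserving Λ) (M : Matrix (Fin dA × Fin dB) (Fin dA × Fin dB) ℂ) :
    (idTensor Λ M).trace = M.trace := by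
  simp only [trace, diag_apply, Fintype.sum_prod_type]
  exact Finset.sum_congr rfl fun a _ => hΛ (of fun b b' => M (a, b) (a, b'))

lemma TracePreserving.trace_tensorMap
    {ΛA : Matrix (Fin dA) (Fin dA) ℂ → Matrix (Fin dA) (Fin dA) ℂ}
    {ΛB : Matrix (Fin dB) (Fin dB) ℂ → Matrix (Fin dB) (Fin dB) ℂ}
    (hA : TracePreserving ΛA) (hB : TracePreserving ΛB)
    (M : Matrix (Fin dA × Fin dB) (Fin dA × Fin dB) ℂ) :
    (tensorMap ΛA ΛB M).trace = M.trace := by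
  rw [tensorMap, hA.trace_tensorId, hB.trace_idTensor]

end TensorExtension

section MeasurePrepare

/-- The measure-and-prepare (entanglement-breaking) map `X ↦ ∑ i, Tr (X E_i) P_i`, which measures
the effects `E` and prepares the outputs `P`. Neither positivity nor normalization of `E` and `P` is
built in. -/
def measurePrepare {ι m n : Type*} [Fintype ι] [Fintype n]
    (E : ι → Matrix n n ℂ) (P : ι → Matrix m m ℂ) : Matrix n n ℂ →ₗ[ℂ] Matrix m m ℂ :=
  ∑ i, (traceLinearMap n ℂ ℂ ∘ₗ LinearMap.mulRight ℂ (E i)).smulRight (P i)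

lemma measurePrepare_apply {ι m n : Type*} [Fintype ι] [Fintype n]
    (E : ι → Matrix n n ℂ) (P : ι → Matrix m m ℂ) (X : Matrix n n ℂ) :
    measurePrepare E P X = ∑ i, (X * E i).trace • P i := by
  simp [measurePrepare]

variable {dA dB : ℕ} {ι κ : Type*} [Fintype ι] [Fintype κ]

lemma idTensor_measurePrepare (F : κ → Matrix (Fin dB) (Fin dB) ℂ)
    (Q : κ → Matrix (Fin dB) (Fin dB) ℂ) (M : Matrix (Fin dA × Fin dB) (Fin dA × Fin dB) ℂ) :
    idTensor (measurePrepare F Q) M = ∑ j, ptraceB (M * (1 ⊗ₖ F j)) ⊗ₖ Q j := by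
  ext p q
  simp [idTensor, measurePrepare_apply, Matrix.sum_apply, ptraceB_mul_one_kronecker_apply]

lemma tensorMap_measurePrepare
    (E P : ι → Matrix (Fin dA) (Fin dA) ℂ) (F Q : κ → Matrix (Fin dB) (Fin dB) ℂ)
    (M : Matrix (Fin dA × Fin dB) (Fin dA × Fin dB) ℂ) :
    tensorMap (measurePrepare E P) (measurePrepare F Q) M
      = ∑ i, ∑ j, (M * (E i ⊗ₖ F j)).trace • (P i ⊗ₖ Q j) := by
  calc tensorMap (measurePrepare E P) (measurePrepare F Q) M
      = ∑ j, measurePrepare E P (ptraceB (M * (1 ⊗ₖ F j))) ⊗ₖ Q j := by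
        simp only [tensorMap, idTensor_measurePrepare, tensorId_sum, tensorId_kronecker]
    _ = ∑ j, ∑ i, (M * (E i ⊗ₖ F j)).trace • (P i ⊗ₖ Q j) := by
        simp only [measurePrepare_apply, trace_ptraceB_mul_one_kronecker_mul, sum_kronecker,
          smul_kronecker]
    _ = ∑ i, ∑ j, (M * (E i ⊗ₖ F j)).trace • (P i ⊗ₖ Q j) := Finset.sum_comm

end MeasurePrepare

section Choi

variable {d : ℕ} {ι : Type*} [Fintype ι]

lemma tensorId_Pplus_apply (Λ : Matrix (Fin d) (Fin d) ℂ →ₗ[ℂ] Matrix (Fin d) (Fin d) ℂ)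
    (a a' c c' : Fin d) :
    tensorId Λ (Pplus d) (a, c) (a', c') = (d : ℂ)⁻¹ * Λ (single c c' 1) a a' := by
  have block_eq : (of fun x x' => Pplus d (x, c) (x', c')) = (d : ℂ)⁻¹ • single c c' (1 : ℂ) := by
    ext x x'
    simp [Pplus, single_apply, eq_comm]
  rw [tensorId, of_apply, block_eq, map_smul, Matrix.smul_apply, smul_eq_mul]

lemma eq_smul_ptraceB_choi_mul (Λ : Matrix (Fin d) (Fin d) ℂ →ₗ[ℂ] Matrix (Fin d) (Fin d) ℂ)
    (X : Matrix (Fin d) (Fin d) ℂ) :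
    Λ X = (d : ℂ) • ptraceB (tensorId Λ (Pplus d) * (1 ⊗ₖ Xᵀ)) := by
  ext a a'
  have hd : (d : ℂ) ≠ 0 := Nat.cast_ne_zero.mpr a.pos.ne'
  have expand : Λ X = ∑ c, ∑ c', X c c' • Λ (single c c' 1) := by
    conv_lhs => rw [matrix_eq_sum_single X]
    simp only [map_sum, ← map_smul, smul_single, smul_eq_mul, mul_one]
  simp only [expand, Matrix.smul_apply, ptraceB_mul_one_kronecker_apply, trace, diag_apply,
    Matrix.mul_apply, of_apply, tensorId_Pplus_apply, transpose_apply, Matrix.sum_apply,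
    smul_eq_mul, Finset.mul_sum]
  refine Finset.sum_congr rfl fun c _ => Finset.sum_congr rfl fun c' _ => ?_
  field_simp

lemma eq_measurePrepare_of_tensorId_Pplus
    {Λ : Matrix (Fin d) (Fin d) ℂ →ₗ[ℂ] Matrix (Fin d) (Fin d) ℂ}
    {P S : ι → Matrix (Fin d) (Fin d) ℂ} (h : tensorId Λ (Pplus d) = ∑ i, P i ⊗ₖ S i) :
    Λ = measurePrepare (fun i => (d : ℂ) • (S i)ᵀ) P := by
  ext1 X
  have trace_mul_transpose (i : ι) : (S i * Xᵀ).trace = (X * (S i)ᵀ).trace := by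
    rw [← trace_transpose, transpose_mul, transpose_transpose]
  rw [eq_smul_ptraceB_choi_mul, h, measurePrepare_apply]
  simp only [Matrix.sum_mul, ← mul_kronecker_mul, Matrix.mul_one, ptraceB_sum, ptraceB_kronecker,
    trace_mul_transpose, Finset.smul_sum, Matrix.mul_smul, trace_smul, smul_assoc]

lemma idTensor_Pplus_submatrix_swap (Λ : Matrix (Fin d) (Fin d) ℂ → Matrix (Fin d) (Fin d) ℂ) :
    (idTensor Λ (Pplus d)).submatrix Prod.swap Prod.swap = tensorId Λ (Pplus d) := by
  ext p q
  simp [idTensor, tensorId, Pplus, eq_comm]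

lemma eq_measurePrepare_of_idTensor_Pplus
    {Λ : Matrix (Fin d) (Fin d) ℂ →ₗ[ℂ] Matrix (Fin d) (Fin d) ℂ}
    {P S : ι → Matrix (Fin d) (Fin d) ℂ} (h : idTensor Λ (Pplus d) = ∑ i, S i ⊗ₖ P i) :
    Λ = measurePrepare (fun i => (d : ℂ) • (S i)ᵀ) P := by
  refine eq_measurePrepare_of_tensorId_Pplus ?_
  rw [← idTensor_Pplus_submatrix_swap, h]
  ext p q
  simp [Matrix.sum_apply, mul_comm]

end Choi

lemma isCC_of_nonneg_of_trace_eq_one {dA dB : ℕ} {e : Fin dA → Fin dA → ℂ}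
    {f : Fin dB → Fin dB → ℂ} (he : ONB dA e) (hf : ONB dB f) {w : Fin dA → Fin dB → ℂ}
    (hw : ∀ i j, 0 ≤ w i j) {σ : Matrix (Fin dA × Fin dB) (Fin dA × Fin dB) ℂ}
    (hσ : σ = ∑ i, ∑ j, w i j • (proj (e i) ⊗ₖ proj (f j))) (htr : σ.trace = 1) :
    IsCC σ := by
  have ofReal_re (i j) : ((w i j).re : ℂ) = w i j := (Complex.eq_re_of_ofReal_le (hw i j)).symm
  have sum_weights : ∑ i, ∑ j, w i j = 1 := by
    simpa only [hσ, trace_sum, trace_smul, trace_kronecker, he.trace_proj_eq_one,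
      hf.trace_proj_eq_one, smul_eq_mul, mul_one] using htr
  refine ⟨e, f, fun i j => (w i j).re, he, hf, fun i j => (Complex.nonneg_iff.mp (hw i j)).1,
    ?_, ?_⟩
  · simpa only [Complex.re_sum, Complex.one_re] using congrArg Complex.re sum_weights
  · simpa only [ofReal_re] using hσ

/-- If the Choi matrix of `Λ_A ⊗ id` is CQ and that of `id ⊗ Λ_B` is QC
(for trace-preserving `Λ_A`, `Λ_B`), then `Λ_A ⊗ Λ_B` maps every bipartite state
to the CC state `∑_{i,j} Tr(ρ_AB (E_i^A ⊗ E_j^B)) |e_i⟩⟨e_i| ⊗ |f_j⟩⟨f_j|`. -/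
theorem cq_qc_choi_product_channel_gives_cc (dA dB : ℕ)
    (ΛA : Matrix (Fin dA) (Fin dA) ℂ →ₗ[ℂ] Matrix (Fin dA) (Fin dA) ℂ)
    (ΛB : Matrix (Fin dB) (Fin dB) ℂ →ₗ[ℂ] Matrix (Fin dB) (Fin dB) ℂ)
    (hTPA : TracePreserving (⇑ΛA)) (hTPB : TracePreserving (⇑ΛB))
    (e : Fin dA → Fin dA → ℂ) (he : ONB dA e)
    (f : Fin dB → Fin dB → ℂ) (hf : ONB dB f)
    (pA : Fin dA → ℝ) (hpA0 : ∀ i, 0 ≤ pA i) (hpA1 : ∑ i, pA i = 1)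
    (σB : Fin dA → Matrix (Fin dA) (Fin dA) ℂ) (hσB : ∀ i, IsState (σB i))
    (pB : Fin dB → ℝ) (hpB0 : ∀ j, 0 ≤ pB j) (hpB1 : ∑ j, pB j = 1)
    (σA : Fin dB → Matrix (Fin dB) (Fin dB) ℂ) (hσA : ∀ j, IsState (σA j))
    (hChoiA : tensorId (⇑ΛA) (Pplus dA)
      = ∑ i, (pA i : ℂ) • (proj (e i) ⊗ₖ σB i))
    (hChoiB : idTensor (⇑ΛB) (Pplus dB)
      = ∑ j, (pB j : ℂ) • (σA j ⊗ₖ proj (f j))) :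
    ∀ ρAB : Matrix (Fin dA × Fin dB) (Fin dA × Fin dB) ℂ, IsState ρAB →
      (tensorMap (⇑ΛA) (⇑ΛB) ρAB
        = ∑ i, ∑ j,
            ((ρAB * (((dA : ℂ) • (pA i : ℂ) • (σB i)ᵀ) ⊗ₖ
                ((dB : ℂ) • (pB j : ℂ) • (σA j)ᵀ))).trace)
              • (proj (e i) ⊗ₖ proj (f j))) ∧
      IsCC (tensorMap (⇑ΛA) (⇑ΛB) ρAB) := by
  intro ρ hρ
  simp only [← kronecker_smul] at hChoiA
  simp only [← smul_kronecker] at hChoiB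
  have formula := tensorMap_measurePrepare (fun i => (dA : ℂ) • ((pA i : ℂ) • σB i)ᵀ)
    (fun i => proj (e i)) (fun j => (dB : ℂ) • ((pB j : ℂ) • σA j)ᵀ) (fun j => proj (f j)) ρ
  rw [← eq_measurePrepare_of_tensorId_Pplus hChoiA,
    ← eq_measurePrepare_of_idTensor_Pplus hChoiB] at formula
  simp only [transpose_smul] at formula
  refine ⟨formula, isCC_of_nonneg_of_trace_eq_one he hf (fun i j => ?_) formula ?_⟩
  · refine trace_mul_nonneg_of_posSemidef hρ.1 (.kronecker ?_ ?_)
    · exact ((hσB i).1.transpose.smul (mod_cast hpA0 i)).smul (Nat.cast_nonneg dA)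
    · exact ((hσA j).1.transpose.smul (mod_cast hpB0 j)).smul (Nat.cast_nonneg dB)
  · exact (hTPA.trace_tensorMap hTPB ρ).trans hρ.2

end
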